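/- arXiv:2003.02714 — 2 statements merged into one kernel-verified Lean document; each statement's English description precedes it below -/
import Mathlib

section
/- Let W be a normal WPO-dilator and let X be a well partial order. If (Z, ι, κ) is an initial Kruskal fixed point of W over X, then Z is a well partial order. -/
universe u

/-- A bundled partial order. -/
structure POrd : Type (u + 1) where
  carrier : Type u
  [str : PartialOrder carrier]

instance : CoeSort POrd.{u} (Type u) := ⟨POrd.carrier⟩
attribute [instance] POrd.str

def POrd.of (X : Type u) [PartialOrder X] : POrd.{u} := ⟨X⟩

/-- A quasi embedding of partial orders. -/
def QuasiEmb {X Y : Type*} [PartialOrder X] [PartialOrder Y] (f : X → Y) : Prop :=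
  ∀ x y : X, f x ≤ f y → x ≤ y

/-- An embedding of partial orders. -/
def IsEmb {X Y : Type*} [PartialOrder X] [PartialOrder Y] (f : X → Y) : Prop :=
  ∀ x y : X, x ≤ y ↔ f x ≤ f y

theorem quasiEmb_id {X : Type*} [PartialOrder X] : QuasiEmb (id : X → X) :=
  fun _ _ h => h

theorem QuasiEmb.comp {X Y Z : Type*} [PartialOrder X] [PartialOrder Y] [PartialOrder Z]
    {f : X → Y} {g : Y → Z} (hf : QuasiEmb f) (hg : QuasiEmb g) :
    QuasiEmb (g ∘ f) := fun x y h => hf x y (hg _ _ h)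

/-- `LeFin a b` is the relation `a ≤ᶠⁱⁿ b` on subsets of a partial order. -/
def LeFin {X : Type*} [PartialOrder X] (a b : Set X) : Prop :=
  ∀ x ∈ a, ∃ y ∈ b, x ≤ y

/-- A PO-dilator: an embedding-preserving functor on partial orders with quasi embeddings,
together with a natural finite support. -/
structure PODilator : Type (u + 1) where
  obj : POrd.{u} → POrd.{u}
  map : {X Y : POrd.{u}} → (f : X → Y) → QuasiEmb f → (obj X → obj Y)
  supp : {X : POrd.{u}} → obj X → Set X
  map_quasiEmb : ∀ {X Y : POrd.{u}} (f : X → Y) (hf : QuasiEmb f), QuasiEmb (map f hf)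
  map_id : ∀ (X : POrd.{u}), map (id : X → X) quasiEmb_id = id
  map_comp : ∀ {X Y Z : POrd.{u}} (f : X → Y) (g : Y → Z) (hf : QuasiEmb f) (hg : QuasiEmb g),
      map (g ∘ f) (hf.comp hg) = map g hg ∘ map f hf
  map_emb : ∀ {X Y : POrd.{u}} (f : X → Y) (hf : QuasiEmb f), IsEmb f → IsEmb (map f hf)
  supp_finite : ∀ {X : POrd.{u}} (σ : obj X), (supp σ).Finite
  supp_natural : ∀ {X Y : POrd.{u}} (f : X → Y) (hf : QuasiEmb f) (σ : obj X),
      supp (map f hf σ) = f '' supp σ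
  supp_cond : ∀ {X Y : POrd.{u}} (f : X → Y) (hf : QuasiEmb f), IsEmb f →
      ∀ σ : obj Y, supp σ ⊆ Set.range f → σ ∈ Set.range (map f hf)

/-- Normality of a PO-dilator. -/
def PODilator.IsNormal (W : PODilator.{u}) : Prop :=
  ∀ (X : POrd.{u}) (σ τ : W.obj X), σ ≤ τ → LeFin (W.supp σ) (W.supp τ)

/-- Well partial orders. -/
def IsWpo (X : Type*) [PartialOrder X] : Prop :=
  ∀ f : ℕ → X, ∃ i j : ℕ, i < j ∧ f i ≤ f j

/-- A WPO-dilator preserves well partial orders. -/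
def PODilator.IsWPO (W : PODilator.{u}) : Prop :=
  ∀ X : POrd.{u}, IsWpo X → IsWpo (W.obj X)

/-- Kruskal fixed point of `W` over `X`. -/
structure IsKruskalFP (W : PODilator.{u}) (X Z : POrd.{u})
    (ι : X → Z) (κ : W.obj Z → Z) : Prop where
  range_disjoint : Set.range ι ∩ Set.range κ = ∅
  iota_le : ∀ x y : X, ι x ≤ ι y → x ≤ y
  iota_kappa : ∀ (x : X) (τ : W.obj Z), ι x ≤ κ τ ↔ ∃ z ∈ W.supp τ, ι x ≤ z
  kappa_iota : ∀ (σ : W.obj Z) (y : X), ¬ κ σ ≤ ι y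
  kappa_kappa : ∀ σ τ : W.obj Z, κ σ ≤ κ τ ↔ (σ ≤ τ ∨ ∃ z ∈ W.supp τ, κ σ ≤ z)

/-- Condition (i) of Theorem 3.5. -/
structure KFPCondI (W : PODilator.{u}) (X Z : POrd.{u})
    (ι : X → Z) (κ : W.obj Z → Z) : Prop where
  range_union : Set.range ι ∪ Set.range κ = Set.univ
  iota_mono : ∀ x y : X, x ≤ y → ι x ≤ ι y
  height : ∃ h : Z → ℕ, ∀ (s : Z) (σ : W.obj Z), s ∈ W.supp σ → h s < h (κ σ)

/-- Initial Kruskal fixed points. -/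
def IsInitialKFP (W : PODilator.{u}) (X Z : POrd.{u})
    (ι : X → Z) (κ : W.obj Z → Z) : Prop :=
  IsKruskalFP W X Z ι κ ∧
  ∀ (Z' : POrd.{u}) (ι' : X → Z') (κ' : W.obj Z' → Z'), IsKruskalFP W X Z' ι' κ' →
    ∃! f : Z → Z', ∃ hf : QuasiEmb f, f ∘ ι = ι' ∧ f ∘ κ = κ' ∘ W.map f hf


namespace KFPaux

/-- The least subset of `Z` containing the range of `ι` and closed under `κ`. -/
inductive Gen (W : PODilator.{u}) (X Z : POrd.{u}) (ι : X → Z) (κ : W.obj Z → Z) : Z → Prop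
  | base (x : X) : Gen W X Z ι κ (ι x)
  | step (σ : W.obj Z) : (∀ z ∈ W.supp σ, Gen W X Z ι κ z) → Gen W X Z ι κ (κ σ)

theorem isEmb_subtype {Z : POrd.{u}} (p : Z → Prop) :
    IsEmb (X := POrd.of {z : Z // p z}) (Y := Z) Subtype.val := fun _ _ => Iff.rfl

theorem isEmb_quasi {X Y : Type*} [PartialOrder X] [PartialOrder Y] {f : X → Y}
    (h : IsEmb f) : QuasiEmb f := fun x y => (h x y).2

theorem quasi_inj {X Y : Type*} [PartialOrder X] [PartialOrder Y] {f : X → Y}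
    (h : QuasiEmb f) : Function.Injective f := fun x y e =>
  le_antisymm (h _ _ e.le) (h _ _ e.ge)

theorem gen_all {W : PODilator.{u}} {X Z : POrd.{u}} {ι : X → Z} {κ : W.obj Z → Z}
    (h : IsInitialKFP W X Z ι κ) (z : Z) : Gen W X Z ι κ z := by
  obtain ⟨hK, hI⟩ := h
  let Z0 : POrd.{u} := POrd.of {z : Z // Gen W X Z ι κ z}
  let g : Z0 → Z := fun z => z.1
  have ge : IsEmb g := isEmb_subtype _
  have hg : QuasiEmb g := isEmb_quasi ge
  let ι0 : X → Z0 := fun x => ⟨ι x, .base x⟩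
  let κ0 : W.obj Z0 → Z0 := fun σ => ⟨κ (W.map g hg σ), .step _ (by
    rw [W.supp_natural]; rintro _ ⟨y, _, rfl⟩; exact y.2)⟩
  have e1 : ∀ x y : Z0, x ≤ y ↔ g x ≤ g y := ge
  have gi : ∀ x, g (ι0 x) = ι x := fun _ => rfl
  have gk : ∀ σ, g (κ0 σ) = κ (W.map g hg σ) := fun _ => rfl
  have hK0 : IsKruskalFP W X Z0 ι0 κ0 := by
    constructor
    · ext a
      simp only [Set.mem_inter_iff, Set.mem_range, Set.mem_empty_iff_false, iff_false]
      rintro ⟨⟨x, hx⟩, ⟨σ, hσ⟩⟩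
      have : g a ∈ Set.range ι ∩ Set.range κ :=
        ⟨⟨x, by rw [← hx]⟩, ⟨W.map g hg σ, by rw [← hσ]⟩⟩
      rw [hK.range_disjoint] at this
      exact this
    · intro x y hxy; exact hK.iota_le x y ((e1 _ _).1 hxy)
    · intro x τ
      rw [e1, gi, gk, hK.iota_kappa, W.supp_natural]
      simp only [Set.exists_mem_image, e1, gi]
    · intro σ y
      rw [e1, gi, gk]; exact hK.kappa_iota _ _
    · intro σ τ
      rw [e1, gk, gk, hK.kappa_kappa, W.supp_natural, ← W.map_emb g hg ge σ τ]
      simp only [Set.exists_mem_image, e1, gk]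
  obtain ⟨f, ⟨hf, h1, h2⟩, -⟩ := hI Z0 ι0 κ0 hK0
  have := (hI Z ι κ hK).unique (y₁ := g ∘ f) (y₂ := id)
    ⟨hf.comp hg, by rw [Function.comp_assoc, h1]; rfl, by
      rw [Function.comp_assoc, h2, W.map_comp]; rfl⟩
    ⟨quasiEmb_id, rfl, by rw [W.map_id]; rfl⟩
  have h3 : g (f z) = z := congrFun this z
  rw [← h3]; exact (f z).2

section
variable {W : PODilator.{u}} {X Z : POrd.{u}} {ι : X → Z} {κ : W.obj Z → Z}

theorem not_kappa_le (hn : W.IsNormal) (hK : IsKruskalFP W X Z ι κ)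
    (hG : ∀ z, Gen W X Z ι κ z) (z : Z) : ∀ τ : W.obj Z, z ∈ W.supp τ → ¬ κ τ ≤ z := by
  induction hG z with
  | base x => intro τ _; exact hK.kappa_iota _ _
  | step σ _ ih =>
    intro τ hz hle
    rcases (hK.kappa_kappa _ _).1 hle with h | ⟨w, hw, h⟩
    · obtain ⟨w, hw, h'⟩ := hn _ _ _ h _ hz
      exact ih w hw σ hw h'
    · exact ih w hw σ hw (le_trans ((hK.kappa_kappa _ _).2 (Or.inr ⟨_, hz, le_rfl⟩)) h)

theorem kappa_inj (hn : W.IsNormal) (hK : IsKruskalFP W X Z ι κ)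
    (hG : ∀ z, Gen W X Z ι κ z) : Function.Injective κ := by
  have key : ∀ σ τ, κ σ = κ τ → σ ≤ τ := by
    intro σ τ e
    rcases (hK.kappa_kappa _ _).1 e.le with h | ⟨w, hw, h⟩
    · exact h
    · rw [e] at h
      exact absurd h (not_kappa_le hn hK hG w τ hw)
  exact fun σ τ e => le_antisymm (key _ _ e) (key _ _ e.symm)

theorem iota_inj (hK : IsKruskalFP W X Z ι κ) : Function.Injective ι :=
  fun x y e => le_antisymm (hK.iota_le _ _ e.le) (hK.iota_le _ _ e.ge)

theorem iota_ne_kappa (hK : IsKruskalFP W X Z ι κ) (x : X) (σ : W.obj Z) : ι x ≠ κ σ := by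
  intro e
  have : ι x ∈ Set.range ι ∩ Set.range κ := ⟨⟨x, rfl⟩, ⟨σ, e.symm⟩⟩
  rw [hK.range_disjoint] at this
  exact this

/-- Partial orders on subsets of `Z` that extend the order of `Z`. -/
structure Good (Z : POrd.{u}) (r : Z → Z → Prop) : Prop where
  dom : ∀ z w, r z w → r z z ∧ r w w
  trans : ∀ x y z, r x y → r y z → r x z
  antisymm : ∀ x y, r x y → r y x → x = y
  ext : ∀ x y, r x x → r y y → x ≤ y → r x y

/-- The partial order given by a good relation. -/
def RP {r : Z → Z → Prop} (hr : Good Z r) : POrd.{u} :=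
  @POrd.of {z : Z // r z z}
    { le := fun x y => r x.1 y.1
      lt := fun x y => r x.1 y.1 ∧ ¬ r y.1 x.1
      lt_iff_le_not_ge := fun _ _ => Iff.rfl
      le_refl := fun x => x.2
      le_trans := fun x y z => hr.trans _ _ _
      le_antisymm := fun x y h1 h2 => Subtype.ext (hr.antisymm _ _ h1 h2) }

def RP.val {r : Z → Z → Prop} (hr : Good Z r) (x : RP hr) : Z := Subtype.val x

theorem RP.le_iff {r : Z → Z → Prop} (hr : Good Z r) (x y : RP hr) :
    x ≤ y ↔ r (RP.val hr x) (RP.val hr y) := Iff.rfl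

theorem RP.prop {r : Z → Z → Prop} (hr : Good Z r) (x : RP hr) :
    r (RP.val hr x) (RP.val hr x) := x.2

def RP.mk {r : Z → Z → Prop} (hr : Good Z r) (z : Z) (hz : r z z) : RP hr :=
  Subtype.mk z hz

theorem RP.quasi {r : Z → Z → Prop} (hr : Good Z r) : QuasiEmb (RP.val hr) :=
  fun x y h => hr.ext _ _ x.2 y.2 h

/-- The order on `W (RP r)`, seen as a relation on `W Z`. -/
def Q (W : PODilator.{u}) {Z : POrd.{u}} (r : Z → Z → Prop) (σ τ : W.obj Z) : Prop :=
  ∃ hr : Good Z r, ∃ σ' τ' : W.obj (RP hr),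
    W.map (RP.val hr) (RP.quasi hr) σ' = σ ∧ W.map (RP.val hr) (RP.quasi hr) τ' = τ ∧ σ' ≤ τ'

theorem Q_iff {r : Z → Z → Prop} (hr : Good Z r) (σ τ : W.obj (RP hr)) :
    Q W r (W.map (RP.val hr) (RP.quasi hr) σ) (W.map (RP.val hr) (RP.quasi hr) τ) ↔ σ ≤ τ := by
  have inj := quasi_inj (W.map_quasiEmb (RP.val hr) (RP.quasi hr))
  constructor
  · rintro ⟨_, σ', τ', e1, e2, h⟩
    rw [inj e1, inj e2] at h; exact h
  · intro h; exact ⟨hr, σ, τ, rfl, rfl, h⟩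

theorem Q_refl_iff {r : Z → Z → Prop} (hr : Good Z r) (σ : W.obj Z) :
    Q W r σ σ ↔ ∃ σ', W.map (RP.val hr) (RP.quasi hr) σ' = σ := by
  constructor
  · rintro ⟨_, σ', _, e, _⟩; exact ⟨σ', e⟩
  · rintro ⟨σ', rfl⟩; exact (Q_iff hr _ _).2 le_rfl

theorem Q_dom {r : Z → Z → Prop} {σ τ : W.obj Z} (h : Q W r σ τ) : Q W r σ σ ∧ Q W r τ τ := by
  obtain ⟨hr, σ', τ', rfl, rfl, _⟩ := h
  exact ⟨(Q_iff hr _ _).2 le_rfl, (Q_iff hr _ _).2 le_rfl⟩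

theorem Q_trans {r : Z → Z → Prop} {ρ σ τ : W.obj Z} (h : Q W r ρ σ) (h' : Q W r σ τ) :
    Q W r ρ τ := by
  obtain ⟨hr, σ', τ', rfl, rfl, h⟩ := h
  obtain ⟨ρ', rfl⟩ := (Q_refl_iff hr _).1 (Q_dom h').2
  rw [Q_iff] at *
  exact h.trans h'

theorem Q_antisymm {r : Z → Z → Prop} {σ τ : W.obj Z} (h : Q W r σ τ) (h' : Q W r τ σ) :
    σ = τ := by
  obtain ⟨hr, σ', τ', rfl, rfl, h⟩ := h
  rw [Q_iff] at h'
  rw [le_antisymm h h']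

theorem Q_ext {r : Z → Z → Prop} {σ τ : W.obj Z} (h : Q W r σ σ) (h' : Q W r τ τ)
    (hl : σ ≤ τ) : Q W r σ τ := by
  obtain ⟨hr, σ', _, rfl, _, _⟩ := h
  obtain ⟨τ', rfl⟩ := (Q_refl_iff hr _).1 h'
  rw [Q_iff]
  exact W.map_quasiEmb _ _ _ _ hl

theorem Q_supp {r : Z → Z → Prop} {σ : W.obj Z} (h : Q W r σ σ) : ∀ z ∈ W.supp σ, r z z := by
  obtain ⟨hr, σ', _, rfl, _, _⟩ := h
  rw [W.supp_natural]
  rintro _ ⟨y, _, rfl⟩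
  exact RP.prop hr y

theorem Q_normal (hn : W.IsNormal) {r : Z → Z → Prop} {σ τ : W.obj Z} (h : Q W r σ τ) :
    ∀ z ∈ W.supp σ, ∃ w ∈ W.supp τ, r z w := by
  obtain ⟨hr, σ', τ', rfl, rfl, h⟩ := h
  rw [W.supp_natural, W.supp_natural]
  rintro _ ⟨y, hy, rfl⟩
  obtain ⟨w, hw, hl⟩ := hn _ _ _ h y hy
  exact ⟨_, ⟨w, hw, rfl⟩, hl⟩

/-- `r` is the restriction of `r'` to its domain. -/
structure Sub (r r' : Z → Z → Prop) : Prop where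
  mono : ∀ x y, r x y → r' x y
  cons : ∀ x y, r' x y → r x x → r y y → r x y

def Sub.incl {r r' : Z → Z → Prop} (s : Sub r r') (hr : Good Z r) (hr' : Good Z r')
    (x : RP hr) : RP hr' := RP.mk hr' (RP.val hr x) (s.mono _ _ (RP.prop hr x))

theorem Sub.emb {r r' : Z → Z → Prop} (s : Sub r r') (hr : Good Z r) (hr' : Good Z r') :
    IsEmb (s.incl hr hr') := fun x y =>
  ⟨fun h => s.mono _ _ h, fun h => s.cons _ _ h (RP.prop hr x) (RP.prop hr y)⟩

theorem Sub.map_incl {r r' : Z → Z → Prop} (s : Sub r r') (hr : Good Z r) (hr' : Good Z r')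
    (σ : W.obj (RP hr)) :
    W.map (RP.val hr') (RP.quasi hr') (W.map (s.incl hr hr') (isEmb_quasi (s.emb hr hr')) σ)
      = W.map (RP.val hr) (RP.quasi hr) σ :=
  (congrFun (W.map_comp (s.incl hr hr') (RP.val hr') (isEmb_quasi (s.emb hr hr'))
    (RP.quasi hr')) σ).symm

theorem Sub.Q_mono {r r' : Z → Z → Prop} (s : Sub r r') (hr' : Good Z r')
    {σ τ : W.obj Z} (h : Q W r σ τ) : Q W r' σ τ := by
  obtain ⟨hr, σ', τ', rfl, rfl, h⟩ := h
  rw [← s.map_incl hr hr', ← s.map_incl hr hr', Q_iff]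
  exact (W.map_emb _ _ (s.emb hr hr') _ _).1 h

theorem Sub.Q_dom_of {r r' : Z → Z → Prop} (s : Sub r r') (hr : Good Z r)
    {σ : W.obj Z} (h : Q W r' σ σ) (h1 : ∀ z ∈ W.supp σ, r z z) : Q W r σ σ := by
  obtain ⟨hr', σ', _, rfl, _, _⟩ := h
  obtain ⟨ρ, rfl⟩ := W.supp_cond _ (isEmb_quasi (s.emb hr hr')) (s.emb hr hr') σ' (by
    intro z hz
    refine ⟨RP.mk hr (RP.val hr' z) (h1 _ ?_), rfl⟩
    rw [W.supp_natural]; exact ⟨z, hz, rfl⟩)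
  rw [s.map_incl, Q_iff]

theorem Sub.Q_cons {r r' : Z → Z → Prop} (s : Sub r r')
    {σ τ : W.obj Z} (h : Q W r' σ τ) (h1 : Q W r σ σ) (h2 : Q W r τ τ) : Q W r σ τ := by
  obtain ⟨hr, σ', _, rfl, _, _⟩ := h1
  obtain ⟨τ', rfl⟩ := (Q_refl_iff hr _).1 h2
  obtain ⟨hr', _⟩ := id h
  rw [← s.map_incl hr hr', ← s.map_incl hr hr', Q_iff] at h
  rw [Q_iff]
  exact (W.map_emb _ _ (s.emb hr hr') _ _).2 h

inductive N (W : PODilator.{u}) (X Z : POrd.{u}) (ι : X → Z) (κ : W.obj Z → Z)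
    (r : Z → Z → Prop) : Z → Z → Prop
  | base (x y : X) : x ≤ y → N W X Z ι κ r (ι x) (ι y)
  | kap (σ τ : W.obj Z) : Q W r σ τ → N W X Z ι κ r (κ σ) (κ τ)
  | sub (s z : Z) (τ : W.obj Z) : Q W r τ τ → z ∈ W.supp τ → N W X Z ι κ r s z →
      N W X Z ι κ r s (κ τ)

theorem N_dom {r : Z → Z → Prop} {s t : Z} (h : N W X Z ι κ r s t) :
    N W X Z ι κ r s s ∧ N W X Z ι κ r t t := by
  induction h with
  | base x y _ => exact ⟨.base _ _ le_rfl, .base _ _ le_rfl⟩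
  | kap σ τ h => exact ⟨.kap _ _ (Q_dom h).1, .kap _ _ (Q_dom h).2⟩
  | sub s z τ h _ _ ih => exact ⟨ih.1, .kap _ _ h⟩

theorem N_inv_iota (hK : IsKruskalFP W X Z ι κ) {r : Z → Z → Prop} {s : Z} {y : X}
    (h : N W X Z ι κ r s (ι y)) : ∃ x, s = ι x ∧ x ≤ y := by
  generalize e : ι y = t at h
  cases h with
  | base x y' hxy => cases iota_inj hK e; exact ⟨x, rfl, hxy⟩
  | kap σ τ h => exact absurd e (iota_ne_kappa hK _ _)
  | sub z τ h _ _ => exact absurd e (iota_ne_kappa hK _ _)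

theorem N_inv_kappa (hn : W.IsNormal) (hK : IsKruskalFP W X Z ι κ)
    (hG : ∀ z, Gen W X Z ι κ z) {r : Z → Z → Prop} {s : Z} {τ : W.obj Z}
    (h : N W X Z ι κ r s (κ τ)) :
    Q W r τ τ ∧ ((∃ σ, s = κ σ ∧ Q W r σ τ) ∨ ∃ z ∈ W.supp τ, N W X Z ι κ r s z) := by
  generalize e : κ τ = t at h
  cases h with
  | base x y' hxy => exact absurd e.symm (iota_ne_kappa hK _ _)
  | kap σ τ h => cases kappa_inj hn hK hG e; exact ⟨(Q_dom h).2, Or.inl ⟨_, rfl, h⟩⟩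
  | sub _ z τ h hz h' => cases kappa_inj hn hK hG e; exact ⟨h, Or.inr ⟨_, hz, h'⟩⟩

theorem N_trans (hn : W.IsNormal) (hK : IsKruskalFP W X Z ι κ)
    (hG : ∀ z, Gen W X Z ι κ z) {r : Z → Z → Prop}
    (hs : ∀ x y, r x y → N W X Z ι κ r x y) (u : Z) :
    ∀ s t, N W X Z ι κ r s t → N W X Z ι κ r t u → N W X Z ι κ r s u := by
  induction hG u with
  | base x =>
    intro s t h1 h2
    obtain ⟨y, rfl, hy⟩ := N_inv_iota hK h2
    obtain ⟨w, rfl, hw⟩ := N_inv_iota hK h1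
    exact .base _ _ (hw.trans hy)
  | step τ _ ih =>
    intro s t h1 h2
    obtain ⟨hτ, ⟨σ, rfl, hσ⟩ | ⟨z, hz, h⟩⟩ := N_inv_kappa hn hK hG h2
    · obtain ⟨-, ⟨ρ, rfl, hρ⟩ | ⟨z, hz, h⟩⟩ := N_inv_kappa hn hK hG h1
      · exact .kap _ _ (Q_trans hρ hσ)
      · obtain ⟨w, hw, hzw⟩ := Q_normal hn hσ z hz
        exact .sub _ w _ hτ hw (ih w hw s z h (hs _ _ hzw))
    · exact .sub _ z _ hτ hz (ih z hz s t h1 h)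

theorem N_not (hn : W.IsNormal) (hK : IsKruskalFP W X Z ι κ)
    (hG : ∀ z, Gen W X Z ι κ z) {r : Z → Z → Prop}
    (hs : ∀ x y, r x y → N W X Z ι κ r x y) (z : Z) :
    ∀ τ : W.obj Z, z ∈ W.supp τ → ¬ N W X Z ι κ r (κ τ) z := by
  induction hG z with
  | base x =>
    intro τ _ h
    obtain ⟨y, e, _⟩ := N_inv_iota hK h
    exact iota_ne_kappa hK _ _ e.symm
  | step σ _ ih =>
    intro τ hz h
    obtain ⟨-, ⟨τ', e, h'⟩ | ⟨w, hw, h'⟩⟩ := N_inv_kappa hn hK hG h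
    · cases kappa_inj hn hK hG e
      obtain ⟨w, hw, h2⟩ := Q_normal hn h' _ hz
      exact ih w hw σ hw (hs _ _ h2)
    · have hτ := (N_inv_kappa hn hK hG (N_dom h).1).1
      exact ih w hw σ hw (N_trans hn hK hG hs _ _ _ (.sub _ _ _ hτ hz (N_dom h).2) h')

theorem N_good (hn : W.IsNormal) (hK : IsKruskalFP W X Z ι κ)
    (hG : ∀ z, Gen W X Z ι κ z) {r : Z → Z → Prop}
    (hs : ∀ x y, r x y → N W X Z ι κ r x y) : Good Z (N W X Z ι κ r) := by
  refine ⟨fun z w h => N_dom h, fun x y z => N_trans hn hK hG hs _ _ _, ?_, ?_⟩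
  · intro s t h1 h2
    rcases hG t with y | ⟨τ, -⟩
    · obtain ⟨x, rfl, hx⟩ := N_inv_iota hK h1
      obtain ⟨x', e, hx'⟩ := N_inv_iota hK h2
      cases iota_inj hK e
      rw [le_antisymm hx hx']
    · obtain ⟨-, ⟨σ, rfl, h⟩ | ⟨w, hw, h⟩⟩ := N_inv_kappa hn hK hG h1
      · obtain ⟨-, ⟨σ', e, h'⟩ | ⟨w, hw, h'⟩⟩ := N_inv_kappa hn hK hG h2
        · cases kappa_inj hn hK hG e
          rw [Q_antisymm h h']
        · exact absurd (N_trans hn hK hG hs _ _ _ h1 h') (N_not hn hK hG hs w σ hw)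
      · exact absurd (N_trans hn hK hG hs _ _ _ h2 h) (N_not hn hK hG hs w τ hw)
  · intro z w
    induction hG w with
    | base y =>
      intro h1 _ h
      rcases hG z with x | ⟨σ, -⟩
      · exact .base _ _ (hK.iota_le _ _ h)
      · exact absurd h (hK.kappa_iota _ _)
    | step τ _ ih =>
      intro h1 h2 h
      have hτ := (N_inv_kappa hn hK hG h2).1
      have key : ∀ v ∈ W.supp τ, z ≤ v → N W X Z ι κ r z (κ τ) := fun v hv hzv =>
        .sub _ v _ hτ hv (ih v hv h1 (hs _ _ (Q_supp hτ v hv)) hzv)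
      rcases hG z with x | ⟨σ, -⟩
      · obtain ⟨v, hv, hx⟩ := (hK.iota_kappa _ _).1 h
        exact key v hv hx
      · rcases (hK.kappa_kappa _ _).1 h with h | ⟨v, hv, hx⟩
        · exact .kap _ _ (Q_ext (N_inv_kappa hn hK hG h1).1 hτ h)
        · exact key v hv hx

theorem N_mono {r r' : Z → Z → Prop} (s : Sub r r') (hr' : Good Z r') {x y : Z}
    (h : N W X Z ι κ r x y) : N W X Z ι κ r' x y := by
  induction h with
  | base x y h => exact .base _ _ h
  | kap σ τ h => exact .kap _ _ (s.Q_mono hr' h)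
  | sub s' z τ h hz _ ih => exact .sub _ _ _ (s.Q_mono hr' h) hz ih

theorem N_cons (hn : W.IsNormal) (hK : IsKruskalFP W X Z ι κ)
    (hG : ∀ z, Gen W X Z ι κ z) {r r' : Z → Z → Prop}
    (hs : ∀ x y, r x y → N W X Z ι κ r x y) (s : Sub r r') (x y : Z) :
    N W X Z ι κ r' x y → N W X Z ι κ r x x → N W X Z ι κ r y y → N W X Z ι κ r x y := by
  induction hG y with
  | base y =>
    intro h _ _
    obtain ⟨x, rfl, h'⟩ := N_inv_iota hK h
    exact .base _ _ h'
  | step τ _ ih =>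
    intro h h1 h2
    have hτ := (N_inv_kappa hn hK hG h2).1
    obtain ⟨-, ⟨σ, rfl, h'⟩ | ⟨w, hw, h'⟩⟩ := N_inv_kappa hn hK hG h
    · exact .kap _ _ (s.Q_cons h' (N_inv_kappa hn hK hG h1).1 hτ)
    · exact .sub _ w _ hτ hw (ih w hw h' h1 (hs _ _ (Q_supp hτ w hw)))

/-- The finite stages. -/
def St (W : PODilator.{u}) (X Z : POrd.{u}) (ι : X → Z) (κ : W.obj Z → Z) : ℕ → Z → Z → Prop
  | 0 => fun _ _ => False
  | n + 1 => N W X Z ι κ (St W X Z ι κ n)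

theorem St_spec (hn : W.IsNormal) (hK : IsKruskalFP W X Z ι κ)
    (hG : ∀ z, Gen W X Z ι κ z) (n : ℕ) :
    Good Z (St W X Z ι κ n) ∧ Sub (St W X Z ι κ n) (St W X Z ι κ (n + 1)) := by
  induction n with
  | zero =>
    exact ⟨⟨fun _ _ h => h.elim, fun _ _ _ h => h.elim, fun _ _ h => h.elim,
      fun _ _ h => h.elim⟩, ⟨fun _ _ h => h.elim, fun _ _ _ h => h.elim⟩⟩
  | succ n ih =>
    have hg : Good Z (St W X Z ι κ (n + 1)) := N_good hn hK hG ih.2.mono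
    exact ⟨hg, ⟨fun x y h => N_mono ih.2 hg h, N_cons hn hK hG ih.2.mono ih.2⟩⟩

theorem St_le (hn : W.IsNormal) (hK : IsKruskalFP W X Z ι κ)
    (hG : ∀ z, Gen W X Z ι κ z) {n m : ℕ} (h : n ≤ m) :
    Sub (St W X Z ι κ n) (St W X Z ι κ m) := by
  induction m, h using Nat.le_induction with
  | base => exact ⟨fun _ _ h => h, fun _ _ h _ _ => h⟩
  | succ m _ ih =>
    have s := (St_spec hn hK hG m).2
    exact ⟨fun x y h => s.mono _ _ (ih.mono _ _ h), fun x y h h1 h2 =>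
      ih.cons _ _ (s.cons _ _ h (ih.mono _ _ h1) (ih.mono _ _ h2)) h1 h2⟩

/-- The limit relation. -/
def Lim (W : PODilator.{u}) (X Z : POrd.{u}) (ι : X → Z) (κ : W.obj Z → Z) (z w : Z) : Prop :=
  ∃ n, St W X Z ι κ n z w

theorem Lim_sub (hn : W.IsNormal) (hK : IsKruskalFP W X Z ι κ)
    (hG : ∀ z, Gen W X Z ι κ z) (n : ℕ) : Sub (St W X Z ι κ n) (Lim W X Z ι κ) := by
  refine ⟨fun x y h => ⟨n, h⟩, ?_⟩
  rintro x y ⟨m, h⟩ h1 h2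
  exact (St_le hn hK hG (le_max_left n m)).cons _ _
    ((St_le hn hK hG (le_max_right n m)).mono _ _ h) h1 h2

theorem Lim_good (hn : W.IsNormal) (hK : IsKruskalFP W X Z ι κ)
    (hG : ∀ z, Gen W X Z ι κ z) : Good Z (Lim W X Z ι κ) := by
  have hm : ∀ {a b : ℕ} (_ : a ≤ b) {x y : Z}, St W X Z ι κ a x y → St W X Z ι κ b x y :=
    fun h => (St_le hn hK hG h).mono _ _
  have g := fun n => (St_spec hn hK hG n).1
  constructor
  · rintro z w ⟨n, h⟩
    exact ⟨⟨n, ((g n).dom _ _ h).1⟩, ⟨n, ((g n).dom _ _ h).2⟩⟩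
  · rintro x y z ⟨n, h⟩ ⟨m, h'⟩
    exact ⟨max n m, (g _).trans _ _ _ (hm (le_max_left _ _) h) (hm (le_max_right _ _) h')⟩
  · rintro x y ⟨n, h⟩ ⟨m, h'⟩
    exact (g (max n m)).antisymm _ _ (hm (le_max_left _ _) h) (hm (le_max_right _ _) h')
  · rintro x y ⟨n, h⟩ ⟨m, h'⟩ hl
    exact ⟨max n m, (g _).ext _ _ (hm (le_max_left _ _) h) (hm (le_max_right _ _) h') hl⟩

theorem finite_stage {Z : Type*} {s : Set Z} (hs : s.Finite) (p : ℕ → Z → Prop)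
    (hp : ∀ {n m}, n ≤ m → ∀ z, p n z → p m z) (h : ∀ z ∈ s, ∃ n, p n z) :
    ∃ n, ∀ z ∈ s, p n z := by
  choose! f hf using h
  obtain ⟨b, hb⟩ := (hs.image f).bddAbove
  exact ⟨b, fun z hz => hp (hb ⟨z, hz, rfl⟩) z (hf z hz)⟩

theorem Lim_Q (hn : W.IsNormal) (hK : IsKruskalFP W X Z ι κ)
    (hG : ∀ z, Gen W X Z ι κ z) {σ τ : W.obj Z} (h : Q W (Lim W X Z ι κ) σ τ) :
    ∃ n, Q W (St W X Z ι κ n) σ τ := by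
  have hd := Q_dom h
  obtain ⟨n, h1⟩ := finite_stage ((W.supp_finite σ).union (W.supp_finite τ))
    (fun n z => St W X Z ι κ n z z) (fun hnm z => (St_le hn hK hG hnm).mono z z) (by
      rintro z (hz | hz)
      · exact Q_supp hd.1 z hz
      · exact Q_supp hd.2 z hz)
  have s := Lim_sub hn hK hG n
  have g := (St_spec hn hK hG n).1
  exact ⟨n, s.Q_cons h (s.Q_dom_of g hd.1 fun z hz => h1 z (Or.inl hz))
    (s.Q_dom_of g hd.2 fun z hz => h1 z (Or.inr hz))⟩

theorem Lim_iff (hn : W.IsNormal) (hK : IsKruskalFP W X Z ι κ)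
    (hG : ∀ z, Gen W X Z ι κ z) (x y : Z) :
    Lim W X Z ι κ x y ↔ N W X Z ι κ (Lim W X Z ι κ) x y := by
  constructor
  · rintro ⟨n, h⟩
    exact N_mono (Lim_sub hn hK hG n) (Lim_good hn hK hG) ((St_spec hn hK hG n).2.mono _ _ h)
  · intro h
    induction h with
    | base x y h => exact ⟨1, .base _ _ h⟩
    | kap σ τ h =>
      obtain ⟨n, h⟩ := Lim_Q hn hK hG h
      exact ⟨n + 1, .kap _ _ h⟩
    | sub s z τ h hz _ ih =>
      obtain ⟨n, h⟩ := Lim_Q hn hK hG h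
      obtain ⟨m, h'⟩ := ih
      refine ⟨max n m + 1, .sub _ z _ ((St_le hn hK hG (le_max_left n m)).Q_mono
        (St_spec hn hK hG _).1 h) hz ?_⟩
      exact (St_le hn hK hG (Nat.le_succ_of_le (le_max_right n m))).mono _ _ h'

theorem iota_mono (hn : W.IsNormal) (h : IsInitialKFP W X Z ι κ) (x y : X) (hxy : x ≤ y) :
    ι x ≤ ι y := by
  have hG := gen_all h
  obtain ⟨hK, hI⟩ := h
  have hr := Lim_good hn hK hG
  have hL := Lim_iff hn hK hG
  let g := RP.val hr
  have hg : QuasiEmb g := RP.quasi hr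
  let ι0 : X → RP hr := fun x => RP.mk hr (ι x) ((hL _ _).2 (.base _ _ le_rfl))
  let κ0 : W.obj (RP hr) → RP hr := fun σ => RP.mk hr (κ (W.map g hg σ))
    ((hL _ _).2 (.kap _ _ ((Q_iff hr _ _).2 le_rfl)))
  have e1 : ∀ a b : RP hr, a ≤ b ↔ N W X Z ι κ (Lim W X Z ι κ) (g a) (g b) :=
    fun a b => hL _ _
  have gi : ∀ x, g (ι0 x) = ι x := fun _ => rfl
  have gk : ∀ σ, g (κ0 σ) = κ (W.map g hg σ) := fun _ => rfl
  have qr : ∀ τ, Q W (Lim W X Z ι κ) (W.map g hg τ) (W.map g hg τ) :=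
    fun τ => (Q_iff hr _ _).2 le_rfl
  have hK0 : IsKruskalFP W X (RP hr) ι0 κ0 := by
    constructor
    · ext a
      simp only [Set.mem_inter_iff, Set.mem_range, Set.mem_empty_iff_false, iff_false]
      rintro ⟨⟨x, hx⟩, ⟨σ, hσ⟩⟩
      exact iota_ne_kappa hK x (W.map g hg σ) (congrArg g (hx.trans hσ.symm))
    · intro x y hxy
      obtain ⟨x', e, h⟩ := N_inv_iota hK ((e1 _ _).1 hxy)
      cases iota_inj hK e; exact h
    · intro x τ
      simp only [e1, gi, gk]
      constructor
      · intro h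
        obtain ⟨-, ⟨σ, e, _⟩ | ⟨w, hw, h⟩⟩ := N_inv_kappa hn hK hG h
        · exact absurd e (iota_ne_kappa hK _ _)
        · rw [W.supp_natural] at hw
          obtain ⟨v, hv, rfl⟩ := hw
          exact ⟨v, hv, h⟩
      · rintro ⟨v, hv, h⟩
        exact .sub _ (g v) _ (qr τ) (by rw [W.supp_natural]; exact ⟨v, hv, rfl⟩) h
    · intro σ y h
      obtain ⟨x', e, h⟩ := N_inv_iota hK ((e1 _ _).1 h)
      exact iota_ne_kappa hK _ _ e.symm
    · intro σ τ
      rw [← Q_iff hr σ τ]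
      simp only [e1, gk]
      constructor
      · intro h
        obtain ⟨-, ⟨σ, e, h⟩ | ⟨w, hw, h⟩⟩ := N_inv_kappa hn hK hG h
        · rw [← kappa_inj hn hK hG e] at h; exact Or.inl h
        · rw [W.supp_natural] at hw
          obtain ⟨v, hv, rfl⟩ := hw
          exact Or.inr ⟨v, hv, h⟩
      · rintro (h | ⟨v, hv, h⟩)
        · exact .kap _ _ h
        · exact .sub _ (g v) _ (qr τ) (by rw [W.supp_natural]; exact ⟨v, hv, rfl⟩) h
  obtain ⟨f, ⟨hf, h1, h2⟩, -⟩ := hI (RP hr) ι0 κ0 hK0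
  apply hf
  have : ∀ x, f (ι x) = ι0 x := fun x => congrFun h1 x
  rw [this, this, e1, gi, gi]
  exact .base _ _ hxy

/-- Levels used for the height function. -/
def Lev (W : PODilator.{u}) (X Z : POrd.{u}) (ι : X → Z) (κ : W.obj Z → Z) : ℕ → Z → Prop
  | 0 => fun _ => False
  | n + 1 => fun z => (∃ x, z = ι x) ∨ ∃ σ, z = κ σ ∧ ∀ w ∈ W.supp σ, Lev W X Z ι κ n w

theorem Lev_succ (n : ℕ) : ∀ z, Lev W X Z ι κ n z → Lev W X Z ι κ (n + 1) z := by
  induction n with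
  | zero => exact fun _ h => h.elim
  | succ n ih =>
    rintro z (h | ⟨σ, e, h⟩)
    · exact Or.inl h
    · exact Or.inr ⟨σ, e, fun w hw => ih w (h w hw)⟩

theorem Lev_mono {n m : ℕ} (h : n ≤ m) (z : Z) (hz : Lev W X Z ι κ n z) :
    Lev W X Z ι κ m z := by
  induction m, h using Nat.le_induction with
  | base => exact hz
  | succ m _ ih => exact Lev_succ _ _ ih

theorem exists_height (hn : W.IsNormal) (hK : IsKruskalFP W X Z ι κ)
    (hG : ∀ z, Gen W X Z ι κ z) :
    ∃ h : Z → ℕ, ∀ (σ : W.obj Z), ∀ s ∈ W.supp σ, h s < h (κ σ) := by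
  classical
  have ex : ∀ z, ∃ n, Lev W X Z ι κ n z := by
    intro z
    induction hG z with
    | base x => exact ⟨1, Or.inl ⟨x, rfl⟩⟩
    | step σ _ ih =>
      obtain ⟨n, h⟩ := finite_stage (W.supp_finite σ) (Lev W X Z ι κ)
        (fun h z => Lev_mono h z) ih
      exact ⟨n + 1, Or.inr ⟨σ, rfl, h⟩⟩
  refine ⟨fun z => Nat.find (ex z), fun σ s hs => ?_⟩
  have h := Nat.find_spec (ex (κ σ))
  show Nat.find (ex s) < Nat.find (ex (κ σ))
  generalize Nat.find (ex (κ σ)) = k at h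
  cases k with
  | zero => exact h.elim
  | succ k =>
    rcases h with ⟨x, e⟩ | ⟨τ, e, h⟩
    · exact absurd e.symm (iota_ne_kappa hK _ _)
    · cases kappa_inj hn hK hG e
      exact Nat.lt_succ_of_le (Nat.find_min' _ (h s hs))

end

end KFPaux

open KFPaux in
/-- If `W` is a normal WPO-dilator and `X` is a wpo, then any initial Kruskal fixed
point of `W` over `X` is a well partial order. -/
theorem initial_kruskalFP_isWpo (W : PODilator.{u}) (hWnormal : W.IsNormal)
    (hWwpo : W.IsWPO) (X : POrd.{u}) (hX : IsWpo X)
    (Z : POrd.{u}) (ι : X → Z) (κ : W.obj Z → Z)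
    (h : IsInitialKFP W X Z ι κ) : IsWpo Z := by
  have hG := gen_all h
  have hmono := iota_mono hWnormal h
  have hK := h.1
  obtain ⟨rk, hrk⟩ := exists_height hWnormal hK hG
  have supp_le : ∀ (σ : W.obj Z), ∀ s ∈ W.supp σ, s ≤ κ σ := by
    intro σ s hs
    rcases hG s with x | ⟨τ, -⟩
    · exact (hK.iota_kappa _ _).2 ⟨_, hs, le_rfl⟩
    · exact (hK.kappa_kappa _ _).2 (Or.inr ⟨_, hs, le_rfl⟩)
  by_contra hbad
  have hex : ∃ f : ℕ → Z, Set.PartiallyWellOrderedOn.IsBadSeq (· ≤ ·) Set.univ f := by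
    unfold IsWpo at hbad
    push Not at hbad
    obtain ⟨f, hf⟩ := hbad
    exact ⟨f, fun _ => trivial, fun m n => hf m n⟩
  obtain ⟨f, ⟨-, hf⟩, hmin⟩ :=
    Set.PartiallyWellOrderedOn.exists_min_bad_of_exists_bad _ rk _ hex
  let p : Z → Prop := fun s => ∃ n, ∃ σ, f n = κ σ ∧ s ∈ W.supp σ
  let T : POrd.{u} := POrd.of {z : Z // p z}
  let g : T → Z := fun z => z.1
  have ge : IsEmb g := isEmb_subtype _
  have hg : QuasiEmb g := isEmb_quasi ge
  have hT : IsWpo T := by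
    intro t
    by_contra hc
    push Not at hc
    have ht : ∀ i, ∃ n, ∃ σ, f n = κ σ ∧ g (t i) ∈ W.supp σ := fun i => (t i).2
    choose N S hN hS using ht
    obtain ⟨i0, hi0⟩ : ∃ i0, ∀ i, N i0 ≤ N i := by
      have hne : (Set.range N).Nonempty := ⟨_, 0, rfl⟩
      obtain ⟨i0, hi0⟩ := Nat.sInf_mem hne
      exact ⟨i0, fun i => hi0 ▸ Nat.sInf_le ⟨i, rfl⟩⟩
    have hle : ∀ i, g (t i) ≤ f (N i) := fun i => hN i ▸ supp_le _ _ (hS i)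
    refine hmin (N i0) (fun n => if n < N i0 then f n else g (t (i0 + (n - N i0))))
      (fun m hm => by simp [hm]) ?_ ⟨fun _ => trivial, ?_⟩
    · simp only [lt_irrefl, if_false, Nat.sub_self, Nat.add_zero]
      have := hrk _ _ (hS i0)
      rwa [← hN i0] at this
    · intro m n hmn
      by_cases h1 : n < N i0
      · have h2 : m < N i0 := hmn.trans h1
        simp only [h1, h2, if_true]
        exact hf m n hmn
      · by_cases h2 : m < N i0
        · simp only [h1, h2, if_true, if_false]
          intro hl
          exact hf m (N (i0 + (n - N i0))) (h2.trans_le (hi0 _)) (hl.trans (hle _))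
        · simp only [h1, h2, if_false]
          intro hl
          exact hc _ _ (by omega) ((ge _ _).2 hl)
  have hWT := hWwpo T hT
  by_cases hinf : {n | f n ∈ Set.range ι}.Infinite
  · let e := Nat.nth (· ∈ {n | f n ∈ Set.range ι})
    have he : StrictMono e := Nat.nth_strictMono hinf
    have hm : ∀ n, ∃ x, ι x = f (e n) := fun n => Nat.nth_mem_of_infinite hinf n
    choose x hx using hm
    obtain ⟨i, j, hij, hl⟩ := hX x
    refine hf _ _ (he hij) ?_
    rw [← hx, ← hx]
    exact hmono _ _ hl
  · have hinf' : {n | f n ∉ Set.range ι}.Infinite := by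
      have := (Set.not_infinite.1 hinf).infinite_compl
      exact this
    let e := Nat.nth (· ∈ {n | f n ∉ Set.range ι})
    have he : StrictMono e := Nat.nth_strictMono hinf'
    have hm : ∀ n, ∃ σ : W.obj T, κ (W.map g hg σ) = f (e n) := by
      intro n
      have h1 : f (e n) ∉ Set.range ι := Nat.nth_mem_of_infinite hinf' n
      obtain ⟨σ, hσ⟩ : ∃ σ, f (e n) = κ σ := by
        generalize f (e n) = v at h1
        rcases hG v with x | ⟨σ, -⟩
        · exact absurd ⟨x, rfl⟩ h1
        · exact ⟨σ, rfl⟩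
      obtain ⟨σ', rfl⟩ := W.supp_cond g hg ge σ (fun z hz => ⟨⟨z, e n, σ, hσ, hz⟩, rfl⟩)
      exact ⟨σ', hσ.symm⟩
    choose s hs using hm
    obtain ⟨i, j, hij, hl⟩ := hWT s
    refine hf _ _ (he hij) ?_
    rw [← hs, ← hs]
    exact (hK.kappa_kappa _ _).2 (Or.inl ((W.map_emb g hg ge _ _).1 hl))
end

section
/- Let (Z, ι, κ) be an initial Kruskal fixed point of a normal PO-dilator W over a partial order X, let (Z', ι', κ') be another Kruskal fixed point of W over X, and let f : Z → Z' be the unique quasi embedding with f ∘ ι = ι' and f ∘ κ = κ' ∘ W(f). If x ≤_X y implies ι'(x) ≤_{Z'} ι'(y) for all x, y ∈ X, then f is an embedding. -/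
universe u

/-- Elements of a Kruskal fixed point generated in at most `n` steps. -/
def KGen (W : PODilator.{u}) (X Z : POrd.{u}) (ι : X → Z) (κ : W.obj Z → Z) : ℕ → Z → Prop
  | 0 => fun _ => False
  | n + 1 => fun z => (∃ x, z = ι x) ∨ ∃ σ, z = κ σ ∧ ∀ s ∈ W.supp σ, KGen W X Z ι κ n s

theorem KGen.succ {W : PODilator.{u}} {X Z : POrd.{u}} {ι : X → Z} {κ : W.obj Z → Z} (n : ℕ) :
    ∀ z, KGen W X Z ι κ n z → KGen W X Z ι κ (n + 1) z := by
  induction n with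
  | zero => intro z hz; exact hz.elim
  | succ n ih =>
    rintro z (⟨x, rfl⟩ | ⟨σ, rfl, hσ⟩)
    · exact Or.inl ⟨x, rfl⟩
    · exact Or.inr ⟨σ, rfl, fun s hs => ih s (hσ s hs)⟩

theorem KGen.mono {W : PODilator.{u}} {X Z : POrd.{u}} {ι : X → Z} {κ : W.obj Z → Z} {n m : ℕ}
    (hnm : n ≤ m) {z : Z} (hz : KGen W X Z ι κ n z) : KGen W X Z ι κ m z := by
  induction hnm with
  | refl => exact hz
  | step _ ih => exact KGen.succ _ _ ih

theorem KGen.kappa {W : PODilator.{u}} {X Z : POrd.{u}} {ι : X → Z} {κ : W.obj Z → Z}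
    (σ : W.obj Z) (hσ : ∀ s ∈ W.supp σ, ∃ n, KGen W X Z ι κ n s) :
    ∃ n, KGen W X Z ι κ n (κ σ) := by
  choose! g hg using hσ
  obtain ⟨N, hN⟩ := ((W.supp_finite σ).image g).bddAbove
  exact ⟨N + 1, Or.inr ⟨σ, rfl, fun s hs => (hg s hs).mono (hN ⟨s, hs, rfl⟩)⟩⟩

theorem isEmb_val {Z : Type u} [PartialOrder Z] (p : Z → Prop) :
    IsEmb (Subtype.val : {z // p z} → Z) := fun _ _ => Iff.rfl

theorem IsEmb.quasi {X Y : Type*} [PartialOrder X] [PartialOrder Y] {f : X → Y} (hf : IsEmb f) :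
    QuasiEmb f := fun x y hxy => (hf x y).2 hxy

/-- An initial fixed point is generated in finitely many steps. -/
theorem IsInitialKFP.gen {W : PODilator.{u}} {X Z : POrd.{u}} {ι : X → Z} {κ : W.obj Z → Z}
    (h : IsInitialKFP W X Z ι κ) (z : Z) : ∃ n, KGen W X Z ι κ n z := by
  obtain ⟨hk, hi⟩ := h
  let p : Z → Prop := fun z => ∃ n, KGen W X Z ι κ n z
  let S : POrd.{u} := POrd.of {z // p z}
  let i : S → Z := Subtype.val
  have hi_emb : IsEmb i := isEmb_val p
  have hiq : QuasiEmb i := hi_emb.quasi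
  have hWi := W.map_emb i hiq hi_emb
  have hsupp := W.supp_natural i hiq
  let ι₀ : X → S := fun x => ⟨ι x, 1, Or.inl ⟨x, rfl⟩⟩
  let κ₀ : W.obj S → S := fun σ => ⟨κ (W.map i hiq σ), KGen.kappa _ (by
    intro s hs
    rw [hsupp] at hs
    obtain ⟨t, _, rfl⟩ := hs
    exact t.2)⟩
  have hS : IsKruskalFP W X S ι₀ κ₀ := by
    refine ⟨?_, ?_, ?_, ?_, ?_⟩
    · ext s
      simp only [Set.mem_inter_iff, Set.mem_empty_iff_false, iff_false]
      rintro ⟨⟨x, hx⟩, ⟨σ, hσ⟩⟩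
      have : ι x ∈ Set.range ι ∩ Set.range κ :=
        ⟨⟨x, rfl⟩, ⟨W.map i hiq σ, congrArg i (hσ.trans hx.symm)⟩⟩
      rw [hk.range_disjoint] at this
      exact this
    · intro x y hxy
      exact hk.iota_le x y hxy
    · intro x τ
      refine (hk.iota_kappa x (W.map i hiq τ)).trans ?_
      rw [hsupp, Set.exists_mem_image]
      rfl
    · intro σ y hσ
      exact hk.kappa_iota _ y hσ
    · intro σ τ
      refine (hk.kappa_kappa (W.map i hiq σ) (W.map i hiq τ)).trans ?_
      rw [hsupp, Set.exists_mem_image, ← hWi σ τ]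
      rfl
  obtain ⟨g, ⟨hg, hgι, hgκ⟩, -⟩ := hi S ι₀ κ₀ hS
  have e : i ∘ g = id := by
    refine (hi Z ι κ hk).unique ⟨hg.comp hiq, ?_, ?_⟩ ⟨quasiEmb_id, rfl, ?_⟩
    · rw [Function.comp_assoc, hgι]; rfl
    · rw [Function.comp_assoc, hgκ, W.map_comp g i hg hiq]; rfl
    · rw [W.map_id]; rfl
  have := congrFun e z
  rw [show z = i (g z) from this.symm]
  exact (g z).2

/-- If `f` is monotone on the supports, then `W(f)` preserves the inequality. -/
theorem PODilator.map_le (W : PODilator.{u}) {Z Z' : POrd.{u}} (f : Z → Z') (hf : QuasiEmb f)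
    (p : Z → Prop) (hp : ∀ s t, p s → p t → s ≤ t → f s ≤ f t) (σ τ : W.obj Z)
    (hσ : ∀ s ∈ W.supp σ, p s) (hτ : ∀ s ∈ W.supp τ, p s) (hle : σ ≤ τ) :
    W.map f hf σ ≤ W.map f hf τ := by
  let S : POrd.{u} := POrd.of {z // p z}
  let i : S → Z := Subtype.val
  have hi_emb : IsEmb i := isEmb_val p
  have hiq : QuasiEmb i := hi_emb.quasi
  obtain ⟨σ, rfl⟩ := W.supp_cond i hiq hi_emb σ (fun s hs => ⟨⟨s, hσ s hs⟩, rfl⟩)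
  obtain ⟨τ, rfl⟩ := W.supp_cond i hiq hi_emb τ (fun s hs => ⟨⟨s, hτ s hs⟩, rfl⟩)
  have h1 : σ ≤ τ := W.map_quasiEmb i hiq _ _ hle
  have h2 : IsEmb (f ∘ i) := fun s t => ⟨fun hst => hp _ _ s.2 t.2 hst, hiq.comp hf s t⟩
  have h3 := (W.map_emb (f ∘ i) (hiq.comp hf) h2 σ τ).1 h1
  rwa [W.map_comp i f hiq hf] at h3

/-- If the second Kruskal fixed point has a monotone `ι'`, then the unique quasi
embedding out of an initial Kruskal fixed point is an embedding. -/
theorem initial_kruskalFP_map_isEmb (W : PODilator.{u}) (hW : W.IsNormal)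
    (X Z Z' : POrd.{u}) (ι : X → Z) (κ : W.obj Z → Z)
    (h : IsInitialKFP W X Z ι κ)
    (ι' : X → Z') (κ' : W.obj Z' → Z') (h' : IsKruskalFP W X Z' ι' κ')
    (f : Z → Z') (hf : QuasiEmb f)
    (hfι : f ∘ ι = ι') (hfκ : f ∘ κ = κ' ∘ W.map f hf)
    (hmono : ∀ x y : X, x ≤ y → ι' x ≤ ι' y) :
    IsEmb f := by
  have hk := h.1
  have eι : ∀ x, f (ι x) = ι' x := fun x => congrFun hfι x
  have eκ : ∀ σ, f (κ σ) = κ' (W.map f hf σ) := fun σ => congrFun hfκ σ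
  have key : ∀ n, ∀ s t, KGen W X Z ι κ n s → KGen W X Z ι κ n t → s ≤ t → f s ≤ f t := by
    intro n
    induction n with
    | zero => intro s t hs; exact hs.elim
    | succ n ih =>
      have inner : ∀ m, m ≤ n + 1 → ∀ s t, KGen W X Z ι κ (n + 1) s → KGen W X Z ι κ m t →
          s ≤ t → f s ≤ f t := by
        intro m
        induction m with
        | zero => intro _ s t _ ht; exact ht.elim
        | succ m ihm =>
          intro hm s t hs ht hst
          rcases ht with ⟨y, rfl⟩ | ⟨τ, rfl, hτ⟩
          · rcases hs with ⟨x, rfl⟩ | ⟨σ, rfl, hσ⟩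
            · rw [eι, eι]
              exact hmono _ _ (hk.iota_le _ _ hst)
            · exact (hk.kappa_iota _ _ hst).elim
          · have sub : ∀ z ∈ W.supp τ, s ≤ z → ∃ z' ∈ W.supp (W.map f hf τ), f s ≤ z' := by
              intro z hz hsz
              refine ⟨f z, ?_, ihm (by omega) s z hs (hτ z hz) hsz⟩
              rw [W.supp_natural]
              exact ⟨z, hz, rfl⟩
            rcases hs with ⟨x, rfl⟩ | ⟨σ, rfl, hσ⟩
            · obtain ⟨z, hz, hsz⟩ := (hk.iota_kappa _ _).1 hst
              have := sub z hz hsz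
              rw [eι] at this
              rw [eι, eκ]
              exact (h'.iota_kappa _ _).2 this
            · rw [eκ, eκ]
              refine (h'.kappa_kappa _ _).2 ?_
              rcases (hk.kappa_kappa _ _).1 hst with hle | ⟨z, hz, hsz⟩
              · exact Or.inl (W.map_le f hf _ ih σ τ hσ
                  (fun s hs => (hτ s hs).mono (by omega)) hle)
              · have := sub z hz hsz
                rw [eκ] at this
                exact Or.inr this
      exact inner (n + 1) le_rfl
  intro s t
  refine ⟨fun hst => ?_, hf s t⟩
  obtain ⟨a, ha⟩ := h.gen s
  obtain ⟨b, hb⟩ := h.gen t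
  exact key (max a b) s t (ha.mono (le_max_left _ _)) (hb.mono (le_max_right _ _)) hst
end
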